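/- Let G be a finite oriented graph. The map Φ : E(G) → E(G_sr) defined by Φ(e) = ((s(e), e), t(e)) is a bijection, and a set S ⊆ E(G) is an oriented matching on G if and only if Φ(S) is a multipath of G_sr. Consequently, the poset of oriented matchings on G ordered by inclusion is order-isomorphic to the path poset P(G_sr). -/

import Mathlib

/-!
Distinct edges of `G` have distinct sources `Sum.inr e` in the source resolution, and every edge
of `G_sr` runs from an `inr` vertex to an `inl` vertex. Hence in any set of edges of `G_sr` the
outdegrees are at most one and there is no coherently oriented cycle, so being a multipath only
means that indegrees are at most one, i.e. that targets are pairwise distinct. Since the edges of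
`G_sr` are by definition the image of `E(G)` under the injection `srPhi`, taking images is an order
embedding of the poset of oriented matchings into the path poset, and it is onto.
-/

/-- An oriented graph on vertex type `V`: a finite set of directed edges with no loops
and at most one of `(v,w)`, `(w,v)` present. -/
structure OrientedGraph (V : Type*) where
  edges : Finset (V × V)
  no_loop : ∀ e ∈ edges, e.1 ≠ e.2
  antisymm : ∀ e ∈ edges, (e.2, e.1) ∉ edges

/-- The indegree of `v` in a set `S` of directed edges. -/
def indegIn {V : Type*} [DecidableEq V] (S : Finset (V × V)) (v : V) : ℕ :=
  (S.filter fun e => e.2 = v).card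

/-- The outdegree of `v` in a set `S` of directed edges. -/
def outdegIn {V : Type*} [DecidableEq V] (S : Finset (V × V)) (v : V) : ℕ :=
  (S.filter fun e => e.1 = v).card

/-- `S` contains a coherently oriented cycle: a nonempty cyclic sequence of pairwise
distinct edges of `S` in which the target of each edge is the source of the next. -/
def HasCohCycle {V : Type*} (S : Finset (V × V)) : Prop :=
  ∃ (n : ℕ) (f : ZMod (n + 1) → V × V), Function.Injective f ∧
    (∀ i, f i ∈ S) ∧ ∀ i, (f i).2 = (f (i + 1)).1

/-- `S` is a multipath of the oriented graph with edge set `D`: a subset of `D` in which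
every vertex has indegree and outdegree at most 1 and which contains no coherently
oriented cycle. -/
def IsMultipathIn {V : Type*} [DecidableEq V] (D S : Finset (V × V)) : Prop :=
  S ⊆ D ∧ (∀ v : V, indegIn S v ≤ 1) ∧ (∀ v : V, outdegIn S v ≤ 1) ∧ ¬ HasCohCycle S

/-- The map sending an edge `e` of `G` to the corresponding edge
`((s(e), e), t(e))` of the source resolution `G_sr`.  A vertex of `G_sr` is either a
vertex of `G` (a target, encoded as `Sum.inl`) or a pair `(s(e), e)` consisting of an
edge of `G` and its source (such a pair being determined by `e`, it is encoded as
`Sum.inr e`). -/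
def srPhi {V : Type*} (e : V × V) : (V ⊕ (V × V)) × (V ⊕ (V × V)) :=
  (Sum.inr e, Sum.inl e.2)

/-- The source resolution `G_sr` of an oriented graph `G`: its vertices are the targets
of edges of `G` (encoded as `Sum.inl w`) together with the pairs `(s(e), e)` for `e` an
edge of `G` (encoded as `Sum.inr e`), and its edges are `((s(e), e), t(e))` for `e` an
edge of `G`. -/
def srGraph {V : Type*} [DecidableEq V] (G : OrientedGraph V) :
    OrientedGraph (V ⊕ (V × V)) where
  edges := G.edges.image srPhi
  no_loop := by
    intro p hp
    simp only [Finset.mem_image] at hp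
    obtain ⟨e, -, rfl⟩ := hp
    simp [srPhi]
  antisymm := by
    intro p hp hq
    simp only [Finset.mem_image] at hp
    obtain ⟨e, -, rfl⟩ := hp
    simp only [srPhi, Finset.mem_image] at hq
    obtain ⟨e', -, h⟩ := hq
    simp [srPhi, Prod.ext_iff] at h

/-- An oriented matching on an oriented graph `G`: a set of edges of `G` whose targets
are pairwise distinct. -/
def OrientedGraph.IsOMatching {V : Type*} (G : OrientedGraph V)
    (S : Finset (V × V)) : Prop :=
  S ⊆ G.edges ∧ ∀ e ∈ S, ∀ e' ∈ S, e ≠ e' → e.2 ≠ e'.2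

theorem srPhi_injective {V : Type*} : Function.Injective (srPhi (V := V)) := by
  intro a b h
  exact Sum.inr_injective (congrArg Prod.fst h)

theorem indegIn_le_one_iff {V : Type*} [DecidableEq V] (S : Finset (V × V)) :
    (∀ v, indegIn S v ≤ 1) ↔ ∀ e ∈ S, ∀ e' ∈ S, e ≠ e' → e.2 ≠ e'.2 := by
  simp only [indegIn, Finset.card_le_one, Finset.mem_filter]
  constructor
  · intro h e he e' he' hne heq
    exact hne (h e'.2 e ⟨he, heq⟩ e' ⟨he', rfl⟩)
  · rintro h v a ⟨ha, rfl⟩ b ⟨hb, hab⟩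
    by_contra hne
    exact h a ha b hb hne hab.symm

theorem outdegIn_image_srPhi_le_one {V : Type*} [DecidableEq V] (S : Finset (V × V))
    (v : V ⊕ (V × V)) : outdegIn (S.image srPhi) v ≤ 1 := by
  simp only [outdegIn, Finset.card_le_one, Finset.mem_filter, Finset.mem_image]
  rintro _ ⟨⟨a, -, rfl⟩, ha⟩ _ ⟨⟨b, -, rfl⟩, hb⟩
  exact congrArg srPhi (Sum.inr_injective (ha.trans hb.symm))

/-- No two edges of the form `srPhi e` are composable: targets are `inl`, sources are `inr`. -/
theorem not_hasCohCycle_image_srPhi {V : Type*} [DecidableEq V] (S : Finset (V × V)) :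
    ¬ HasCohCycle (S.image srPhi) := by
  rintro ⟨n, f, -, hmem, hcyc⟩
  obtain ⟨a, -, ha⟩ := Finset.mem_image.1 (hmem 0)
  obtain ⟨b, -, hb⟩ := Finset.mem_image.1 (hmem (0 + 1))
  have h := hcyc 0
  rw [← ha, ← hb] at h
  exact Sum.inl_ne_inr h

theorem isOMatching_iff_isMultipathIn_image {V : Type*} [DecidableEq V] (G : OrientedGraph V)
    (S : Finset (V × V)) :
    G.IsOMatching S ↔ IsMultipathIn (srGraph G).edges (S.image srPhi) := by
  have hsub : S.image srPhi ⊆ (srGraph G).edges ↔ S ⊆ G.edges :=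
    Finset.image_subset_image_iff srPhi_injective
  simp only [OrientedGraph.IsOMatching, IsMultipathIn, hsub, indegIn_le_one_iff,
    outdegIn_image_srPhi_le_one, not_hasCohCycle_image_srPhi, implies_true, not_false_eq_true,
    and_true, Finset.forall_mem_image, srPhi_injective.ne_iff]
  simp only [srPhi, ne_eq, Sum.inl.injEq]

/-- the map `Φ : e ↦ ((s(e), e), t(e))` is a bijection from the edges of a
finite oriented graph `G` onto the edges of its source resolution `G_sr`; a set
`S ⊆ E(G)` is an oriented matching on `G` iff `Φ(S)` is a multipath of `G_sr`; and
consequently the poset of oriented matchings on `G` (ordered by inclusion) is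
order-isomorphic to the path poset `P(G_sr)`. -/
theorem oMatchingPoset_orderIso_pathPoset_srGraph {V : Type*} [DecidableEq V]
    (G : OrientedGraph V) :
    Set.BijOn srPhi (↑G.edges : Set (V × V))
        (↑(srGraph G).edges : Set ((V ⊕ (V × V)) × (V ⊕ (V × V))))
      ∧ (∀ S : Finset (V × V), S ⊆ G.edges →
          (G.IsOMatching S ↔ IsMultipathIn (srGraph G).edges (S.image srPhi)))
      ∧ Nonempty ({S : Finset (V × V) // G.IsOMatching S} ≃o
          {T : Finset ((V ⊕ (V × V)) × (V ⊕ (V × V))) //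
            IsMultipathIn (srGraph G).edges T}) := by
  refine ⟨⟨?_, srPhi_injective.injOn, ?_⟩,
    fun S _ => isOMatching_iff_isMultipathIn_image G S, ⟨?_⟩⟩
  · intro e he
    exact Finset.mem_image_of_mem srPhi he
  · intro p hp
    exact Finset.mem_image.1 hp
  · let F : {S : Finset (V × V) // G.IsOMatching S} ↪o
        {T : Finset ((V ⊕ (V × V)) × (V ⊕ (V × V))) // IsMultipathIn (srGraph G).edges T} :=
      OrderEmbedding.ofMapLEIff
        (fun S => ⟨S.1.image srPhi, (isOMatching_iff_isMultipathIn_image G S.1).1 S.2⟩)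
        (fun _ _ => Finset.image_subset_image_iff srPhi_injective)
    refine RelIso.ofSurjective F ?_
    rintro ⟨T, hT⟩
    obtain ⟨S, -, rfl⟩ := Finset.subset_image_iff.1 hT.1
    exact ⟨⟨S, (isOMatching_iff_isMultipathIn_image G S).2 hT⟩, rfl⟩
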